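/- Let n ≥ 1 be a natural number. Then for every a ∈ Λ̃_n, the strict inequality ∫_0^T |a(x) − λ̃_{2n−1}| dx > (2π(2n−1)(2n+1)/T) · cot((2n−1)π/(2(2n+1))) holds. In particular, the infimum β̃_{1,n} = inf_{a ∈ Λ̃_n} ‖a − λ̃_{2n−1}‖_{L¹(0,T)} is not attained. -/

import Mathlib

open MeasureTheory Set Real

/-- `u` is a solution of `u'' + a·u = 0` on `[c,d]`, with derivative function `v`. -/
def IsSolOn (a u v : ℝ → ℝ) (c d : ℝ) : Prop :=
  (∀ x ∈ Set.Icc c d, HasDerivWithinAt u (v x) (Set.Icc c d) x) ∧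
  (∀ x ∈ Set.Icc c d, v x = v c - ∫ t in c..x, a t * u t)

/-- Membership in `L_T`: measurable, `T`-periodic and integrable on `[0,T]`. -/
def MemLT (T : ℝ) (a : ℝ → ℝ) : Prop :=
  Measurable a ∧ (∀ x, a (x + T) = a x) ∧ IntegrableOn a (Set.Icc 0 T)

/-- `c ≺ d` : `c ≤ d` a.e. on `[0,T]` and `c < d` on a set of positive measure. -/
def Prec (T : ℝ) (c d : ℝ → ℝ) : Prop :=
  (∀ᵐ x ∂(volume.restrict (Set.Icc 0 T)), c x ≤ d x) ∧
  0 < volume {x ∈ Set.Icc 0 T | c x < d x}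

/-- `(u,v)` solves the periodic problem `u'' + a u = 0`, `u(0)=u(T)`, `u'(0)=u'(T)`. -/
def PeriodicSol (T : ℝ) (a u v : ℝ → ℝ) : Prop :=
  IsSolOn a u v 0 T ∧ u 0 = u T ∧ v 0 = v T

/-- `(u,v)` solves the antiperiodic problem `u'' + a u = 0`, `u(0)+u(T)=0`, `u'(0)+u'(T)=0`. -/
def AntiperiodicSol (T : ℝ) (a u v : ℝ → ℝ) : Prop :=
  IsSolOn a u v 0 T ∧ u 0 + u T = 0 ∧ v 0 + v T = 0

/-- The `(2n-1)`-st periodic eigenvalue `λ_{2n-1} = 4 n² π² / T²`. -/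
noncomputable def lam (T : ℝ) (n : ℕ) : ℝ := 4 * (n : ℝ) ^ 2 * Real.pi ^ 2 / T ^ 2

/-- The `(2n-1)`-st antiperiodic eigenvalue `λ̃_{2n-1} = (2n-1)² π² / T²`. -/
noncomputable def lamT (T : ℝ) (n : ℕ) : ℝ := (2 * (n : ℝ) - 1) ^ 2 * Real.pi ^ 2 / T ^ 2

/-- The set `Λ_n`. -/
def LambdaN (T : ℝ) (n : ℕ) : Set (ℝ → ℝ) :=
  {a | MemLT T a ∧ Prec T (fun _ => lam T n) a ∧
    ∃ u v : ℝ → ℝ, PeriodicSol T a u v ∧ ∃ x ∈ Set.Icc 0 T, u x ≠ 0}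

/-- The set `Λ̃_n`. -/
def LambdaTildeN (T : ℝ) (n : ℕ) : Set (ℝ → ℝ) :=
  {a | MemLT T a ∧ Prec T (fun _ => lamT T n) a ∧
    ∃ u v : ℝ → ℝ, AntiperiodicSol T a u v ∧ ∃ x ∈ Set.Icc 0 T, u x ≠ 0}

/-- The constant `β_{1,n}` of the periodic `L¹` Lyapunov inequality. -/
noncomputable def beta1 (T : ℝ) (n : ℕ) : ℝ :=
  8 * Real.pi * (n : ℝ) * ((n : ℝ) + 1) / T * Real.cot ((n : ℝ) * Real.pi / (2 * ((n : ℝ) + 1)))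

/-- The constant `β̃_{1,n}` of the antiperiodic `L¹` Lyapunov inequality. -/
noncomputable def betaT1 (T : ℝ) (n : ℕ) : ℝ :=
  2 * Real.pi * (2 * (n : ℝ) - 1) * (2 * (n : ℝ) + 1) / T *
    Real.cot ((2 * (n : ℝ) - 1) * Real.pi / (2 * (2 * (n : ℝ) + 1)))

/-- The function is absolutely continuous on the interval, with the given a.e. derivative. -/
def ACD (T : ℝ) (f f' : ℝ → ℝ) : Prop :=
  AbsolutelyContinuousOnInterval f 0 T ∧ ∀ᵐ x, x ∈ Set.uIcc 0 T → HasDerivAt f (f' x) x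

theorem AC_comp {T : ℝ} {f Φ Φ' : ℝ → ℝ} (hf : AbsolutelyContinuousOnInterval f 0 T)
    (hΦ : ∀ x, HasDerivAt Φ (Φ' x) x) (hc : Continuous Φ') :
    AbsolutelyContinuousOnInterval (fun x => Φ (f x)) 0 T := by
  obtain ⟨C, hC⟩ := hf.exists_bound
  have hcd : ContDiff ℝ 1 Φ := by
    rw [contDiff_one_iff_deriv]
    refine ⟨fun x => (hΦ x).differentiableAt, ?_⟩
    have : deriv Φ = Φ' := funext fun x => (hΦ x).deriv
    rwa [this]
  obtain ⟨K, hK⟩ := (hcd.contDiffOn (s := Set.Icc (-C) C)).exists_lipschitzOnWith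
    (by decide) (convex_Icc _ _) isCompact_Icc
  rw [absolutelyContinuousOnInterval_iff] at hf ⊢
  intro ε hε
  obtain ⟨δ, hδ, h⟩ := hf (ε / (K + 1)) (by positivity)
  refine ⟨δ, hδ, fun E hE hE2 => ?_⟩
  have h1 := h E hE hE2
  have hm : ∀ x ∈ Set.uIcc 0 T, f x ∈ Set.Icc (-C) C := fun x hx => by
    have := hC x hx
    rw [Real.norm_eq_abs] at this
    exact abs_le.mp this
  calc
    _ ≤ ∑ i ∈ Finset.range E.1, K * dist (f (E.2 i).1) (f (E.2 i).2) := by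
      apply Finset.sum_le_sum
      intro i hi
      exact hK.dist_le_mul _ (hm _ (hE.left i hi).left) _ (hm _ (hE.left i hi).right)
    _ = K * ∑ i ∈ Finset.range E.1, dist (f (E.2 i).1) (f (E.2 i).2) := by
      rw [Finset.mul_sum]
    _ ≤ K * (ε / (K + 1)) := by gcongr
    _ < (K + 1) * (ε / (K + 1)) := by gcongr; linarith
    _ = ε := by field

theorem ACD.comp {T : ℝ} {f f' Φ Φ' : ℝ → ℝ} (hf : ACD T f f')
    (hΦ : ∀ x, HasDerivAt Φ (Φ' x) x) (hc : Continuous Φ') :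
    ACD T (fun x => Φ (f x)) (fun x => Φ' (f x) * f' x) := by
  refine ⟨AC_comp hf.1 hΦ hc, ?_⟩
  filter_upwards [hf.2] with x hx hxT
  exact (hΦ (f x)).comp x (hx hxT)

theorem ACD.mul {T : ℝ} {f f' g g' : ℝ → ℝ} (hf : ACD T f f') (hg : ACD T g g') :
    ACD T (fun x => f x * g x) (fun x => f' x * g x + f x * g' x) := by
  refine ⟨hf.1.fun_mul hg.1, ?_⟩
  filter_upwards [hf.2, hg.2] with x hx hx2 hxT
  exact (hx hxT).mul (hx2 hxT)

theorem ACD.add {T : ℝ} {f f' g g' : ℝ → ℝ} (hf : ACD T f f') (hg : ACD T g g') :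
    ACD T (fun x => f x + g x) (fun x => f' x + g' x) := by
  refine ⟨hf.1.fun_add hg.1, ?_⟩
  filter_upwards [hf.2, hg.2] with x hx hx2 hxT
  exact (hx hxT).add (hx2 hxT)

theorem ACD.sub {T : ℝ} {f f' g g' : ℝ → ℝ} (hf : ACD T f f') (hg : ACD T g g') :
    ACD T (fun x => f x - g x) (fun x => f' x - g' x) := by
  refine ⟨hf.1.fun_sub hg.1, ?_⟩
  filter_upwards [hf.2, hg.2] with x hx hx2 hxT
  exact (hx hxT).sub (hx2 hxT)

theorem ACD.const_mul {T : ℝ} {f f' : ℝ → ℝ} (c : ℝ) (hf : ACD T f f') :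
    ACD T (fun x => c * f x) (fun x => c * f' x) := by
  refine ⟨hf.1.const_mul c, ?_⟩
  filter_upwards [hf.2] with x hx hxT
  exact (hx hxT).const_mul c

theorem ACD.of_integral {T : ℝ} {g : ℝ → ℝ} (c : ℝ) (hg : IntervalIntegrable g volume 0 T) :
    ACD T (fun x => c + ∫ t in (0:ℝ)..x, g t) g := by
  refine ⟨?_, ?_⟩
  · have h1 : AbsolutelyContinuousOnInterval (fun _ : ℝ => c) 0 T :=
      (contDiff_const (𝕜 := ℝ) (n := 1)).contDiffOn.absolutelyContinuousOnInterval
    exact h1.fun_add (hg.absolutelyContinuousOnInterval_intervalIntegral (by simp))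
  · filter_upwards [hg.ae_hasDerivAt_integral] with x hx hxT
    exact (hx hxT 0 (by simp)).const_add c

theorem ACD.integral {T : ℝ} {f f' : ℝ → ℝ} (hf : ACD T f f') :
    IntervalIntegrable f' volume 0 T ∧ ∫ x in (0:ℝ)..T, f' x = f T - f 0 := by
  have hae : ∀ᵐ x, x ∈ Set.uIoc 0 T → deriv f x = f' x := by
    filter_upwards [hf.2] with x hx hxT
    exact (hx (Set.uIoc_subset_uIcc hxT)).deriv
  refine ⟨?_, ?_⟩
  · refine hf.1.intervalIntegrable_deriv.congr_ae ?_
    exact (ae_restrict_iff' measurableSet_uIoc).mpr hae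
  · rw [← hf.1.integral_deriv_eq_sub]
    exact (intervalIntegral.integral_congr_ae hae).symm

theorem ACD.restrict {T x y : ℝ} {f f' : ℝ → ℝ} (hf : ACD T f f') (hx : x ∈ Set.uIcc 0 T)
    (hy : y ∈ Set.uIcc 0 T) :
    ∫ t in x..y, f' t = f y - f x := by
  have hs : Set.uIcc x y ⊆ Set.uIcc 0 T := Set.uIcc_subset_uIcc hx hy
  rw [← (hf.1.mono hs).integral_deriv_eq_sub]
  refine (intervalIntegral.integral_congr_ae ?_).symm
  filter_upwards [hf.2] with t ht htT
  exact (ht (hs (Set.uIoc_subset_uIcc htT))).deriv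

theorem ACD.mono_of_nonneg {T x y : ℝ} (hT : 0 < T) {f f' : ℝ → ℝ} (hf : ACD T f f')
    (h0 : ∀ᵐ t, t ∈ Set.uIcc 0 T → 0 ≤ f' t)
    (hx : x ∈ Set.Icc 0 T) (hy : y ∈ Set.Icc 0 T) (hxy : x ≤ y) : f x ≤ f y := by
  rw [← Set.uIcc_of_le hT.le] at hx hy
  have := hf.restrict hx hy
  have h2 : 0 ≤ ∫ t in x..y, f' t := by
    rw [intervalIntegral.integral_of_le hxy]
    apply MeasureTheory.integral_nonneg_of_ae
    rw [Filter.EventuallyLE, ae_restrict_iff' measurableSet_Ioc]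
    filter_upwards [h0] with t ht htT
    apply ht
    apply Set.uIcc_subset_uIcc hx hy
    rw [Set.uIcc_of_le hxy]
    exact Set.Ioc_subset_Icc_self htT
  linarith

theorem ACD.const_of_zero {T x : ℝ} (hT : 0 < T) {f f' : ℝ → ℝ} (hf : ACD T f f')
    (h0 : ∀ᵐ t, t ∈ Set.uIcc 0 T → f' t = 0)
    (hx : x ∈ Set.Icc 0 T) : f x = f 0 := by
  rw [← Set.uIcc_of_le hT.le] at hx
  obtain ⟨C, hC⟩ := hf.1.const_of_ae_hasDerivAt_zero (by
    filter_upwards [h0, hf.2] with t h1 h2 h3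
    rw [← h1 h3]; exact h2 h3)
  rw [hC x hx, hC 0 (by simp)]

/-- Cut-off weight for the Prüfer angle. -/
noncomputable def Gw (s t : ℝ) : ℝ := 1 / max (s ^ 2) (Real.sin t ^ 2)

theorem Gw_cont {s : ℝ} (hs : 0 < s) : Continuous (Gw s) := by
  unfold Gw
  refine continuous_const.div (by fun_prop) fun t => ?_
  exact (lt_of_lt_of_le (by positivity) (le_max_left _ _)).ne'

theorem Gw_pos {s : ℝ} (hs : 0 < s) (t : ℝ) : 0 < Gw s t := by
  unfold Gw
  have : 0 < max (s ^ 2) (Real.sin t ^ 2) := lt_of_lt_of_le (by positivity) (le_max_left _ _)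
  positivity

theorem Gw_le {s : ℝ} (hs : 0 < s) (t : ℝ) : Gw s t ≤ 1 / s ^ 2 := by
  unfold Gw
  exact one_div_le_one_div_of_le (by positivity) (le_max_left _ _)

theorem Gw_lt {s : ℝ} (hs : 0 < s) (t : ℝ) (h : s ^ 2 < Real.sin t ^ 2) : Gw s t < 1 / s ^ 2 := by
  unfold Gw
  exact one_div_lt_one_div_of_lt (by positivity) (lt_of_lt_of_le h (le_max_right _ _))

theorem Gw_mul_le {s : ℝ} (hs : 0 < s) (t : ℝ) : Gw s t * Real.sin t ^ 2 ≤ 1 := by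
  unfold Gw
  have : 0 < max (s ^ 2) (Real.sin t ^ 2) := lt_of_lt_of_le (by positivity) (le_max_left _ _)
  rw [one_div_mul_eq_div, div_le_one this]
  exact le_max_right _ _

theorem Gw_periodic (s : ℝ) : Function.Periodic (Gw s) Real.pi := by
  intro t
  simp [Gw, Real.sin_add_pi]

theorem Gw_int_period {y : ℝ} (h0 : 0 < y) (h1 : y < Real.pi / 2) :
    ∫ t in (-y)..(-y + Real.pi), Gw (Real.sin y) t =
      2 * y / Real.sin y ^ 2 + 2 * Real.cot y := by
  have hs : 0 < Real.sin y := Real.sin_pos_of_pos_of_lt_pi h0 (by linarith [Real.pi_pos])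
  have hc := Gw_cont hs
  rw [← intervalIntegral.integral_add_adjacent_intervals (b := y) (hc.intervalIntegrable _ _)
    (hc.intervalIntegrable _ _)]
  have e1 : ∫ t in (-y)..y, Gw (Real.sin y) t = ∫ t in (-y)..y, 1 / Real.sin y ^ 2 := by
    apply intervalIntegral.integral_congr
    intro t ht
    rw [Set.uIcc_of_le (by linarith)] at ht
    unfold Gw
    have ha : |Real.sin t| ≤ Real.sin y := by
      rw [abs_le, ← Real.sin_neg]
      constructor
      · exact Real.sin_le_sin_of_le_of_le_pi_div_two (by linarith) (by linarith [ht.2]) ht.1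
      · exact Real.sin_le_sin_of_le_of_le_pi_div_two (by linarith [ht.1]) (by linarith [ht.2]) ht.2
    simp only
    rw [max_eq_left]
    rw [← sq_abs]
    gcongr
  have e2 : ∫ t in y..(-y + Real.pi), Gw (Real.sin y) t = 
      (-Real.cot (-y + Real.pi)) - (-Real.cot y) := by
    apply intervalIntegral.integral_eq_sub_of_hasDerivAt (f := fun t => - Real.cot t)
    · intro t ht
      rw [Set.uIcc_of_le (by linarith)] at ht
      have hst : 0 < Real.sin t := Real.sin_pos_of_pos_of_lt_pi (by linarith [ht.1])
        (by linarith [ht.2])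
      have hge : Real.sin y ≤ Real.sin t := by
        rcases le_total t (Real.pi / 2) with h | h
        · exact Real.sin_le_sin_of_le_of_le_pi_div_two (by linarith) h ht.1
        · rw [← Real.sin_pi_sub t]
          exact Real.sin_le_sin_of_le_of_le_pi_div_two (by linarith) (by linarith)
            (by linarith [ht.2])
      have := ((Real.hasDerivAt_cos t).div (Real.hasDerivAt_sin t) hst.ne').neg
      have hfun : (fun t => - Real.cot t) = -(Real.cos / Real.sin) := by
        ext t; simp [Real.cot_eq_cos_div_sin]
      rw [hfun]
      convert this using 1
      unfold Gw
      rw [max_eq_right (by gcongr), ← neg_div]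
      congr 1
      nlinarith [Real.sin_sq_add_cos_sq t]
    · exact hc.intervalIntegrable _ _
  rw [e1, e2]
  have : Real.cot (-y + Real.pi) = - Real.cot y := by
    rw [Real.cot_eq_cos_div_sin, Real.cot_eq_cos_div_sin, neg_add_eq_sub, Real.cos_pi_sub,
      Real.sin_pi_sub, neg_div]
  rw [this]
  simp
  ring

theorem Gw_int {y : ℝ} (h0 : 0 < y) (h1 : y < Real.pi / 2) (t0 : ℝ) (N : ℕ) :
    ∫ t in t0..(t0 + N * Real.pi), Gw (Real.sin y) t =
      N * (2 * y / Real.sin y ^ 2 + 2 * Real.cot y) := by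
  have hs : 0 < Real.sin y := Real.sin_pos_of_pos_of_lt_pi h0 (by linarith [Real.pi_pos])
  have hc := Gw_cont hs
  have h := (Gw_periodic (Real.sin y)).intervalIntegral_add_zsmul_eq (N : ℤ) t0
    (fun a b => hc.intervalIntegrable a b)
  simp only [zsmul_eq_mul, Int.cast_natCast] at h
  rw [h, (Gw_periodic (Real.sin y)).intervalIntegral_add_eq t0 (-y), Gw_int_period h0 h1]

theorem Gw_primitive {s : ℝ} (hs : 0 < s) (t : ℝ) :
    HasDerivAt (fun t => ∫ r in (0:ℝ)..t, Gw s r) (Gw s t) t :=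
  (Gw_cont hs).integral_hasStrictDerivAt 0 t |>.hasDerivAt

theorem nonvanishing {T ω : ℝ} (hT : 0 < T) (hω : 0 < ω) {q U V : ℝ → ℝ}
    (hq : IntervalIntegrable q volume 0 T) (hq0 : ∀ᵐ x, x ∈ Set.uIcc 0 T → 0 ≤ q x)
    (hU : ACD T U V) (hV : ACD T V (fun x => -((ω ^ 2 + q x) * U x)))
    (hne : ∃ x ∈ Set.Icc 0 T, U x ≠ 0) :
    ∀ x ∈ Set.Icc 0 T, 0 < ω ^ 2 * U x ^ 2 + V x ^ 2 := by
  have hQ := ACD.of_integral 0 (hq.const_mul ω⁻¹)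
  set Q : ℝ → ℝ := fun x => 0 + ∫ t in (0:ℝ)..x, ω⁻¹ * q t with hQdef
  have hE := ((hU.mul hU).const_mul (ω ^ 2)).add (hV.mul hV)
  have hP := hE.mul (hQ.comp Real.hasDerivAt_exp Real.continuous_exp)
  have hM := (hE.mul ((hQ.const_mul (-1)).comp Real.hasDerivAt_exp Real.continuous_exp)).const_mul (-1)
  have key : ∀ a b c : ℝ, 0 ≤ a → 2 * ω * (b * c) * a ≤ a * (ω ^ 2 * (b * b) + c * c) ∧
      -(2 * ω * (b * c) * a) ≤ a * (ω ^ 2 * (b * b) + c * c) := by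
    intro a b c ha
    constructor
    · nlinarith [mul_nonneg ha (sq_nonneg (ω * b - c))]
    · nlinarith [mul_nonneg ha (sq_nonneg (ω * b + c))]
  have hP' := fun {x y : ℝ} => ACD.mono_of_nonneg (x := x) (y := y) hT hP (by
    filter_upwards [hq0] with x hx hxT
    have h := (key (ω⁻¹ * q x) (U x) (V x) (mul_nonneg (by positivity) (hx hxT))).1
    have : 2 * ω * (U x * V x) * (ω⁻¹ * q x) = 2 * q x * (U x * V x) := by field_simp
    rw [this] at h
    have e := Real.exp_pos (Q x)
    have : ∀ A B C : ℝ, 0 < C → 0 ≤ A + B → 0 ≤ A * C + B * C := fun A B C h1 h2 => by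
      nlinarith
    have := this (-(2 * q x * (U x * V x))) (ω⁻¹ * q x * (ω ^ 2 * (U x * U x) + V x * V x)) _ e
      (by linarith)
    convert this using 1
    ring)
  have hM' := fun {x y : ℝ} => ACD.mono_of_nonneg (x := x) (y := y) hT hM (by
    filter_upwards [hq0] with x hx hxT
    have h := (key (ω⁻¹ * q x) (U x) (V x) (mul_nonneg (by positivity) (hx hxT))).2
    have : 2 * ω * (U x * V x) * (ω⁻¹ * q x) = 2 * q x * (U x * V x) := by field_simp
    rw [this] at h
    have e := Real.exp_pos (-1 * Q x)
    have : ∀ A B C : ℝ, 0 < C → 0 ≤ A + B → 0 ≤ A * C + B * C := fun A B C h1 h2 => by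
      nlinarith
    have := this ((2 * q x * (U x * V x))) (ω⁻¹ * q x * (ω ^ 2 * (U x * U x) + V x * V x)) _ e
      (by linarith)
    convert this using 1
    ring)
  intro x hx
  by_contra hcon
  have hx0 : ω ^ 2 * (U x * U x) + V x * V x = 0 := by
    apply le_antisymm
    · rw [not_lt] at hcon; nlinarith
    · nlinarith [mul_self_nonneg (ω * U x), mul_self_nonneg (V x)]
  obtain ⟨z, hz, hzU⟩ := hne
  have hz0 : 0 < ω ^ 2 * (U z * U z) + V z * V z := by
    have := mul_self_pos.mpr hzU
    have := mul_self_nonneg (V z)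
    positivity
  rcases le_total z x with h | h
  · have := hP' hz hx h
    rw [hx0, zero_mul] at this
    have := mul_pos hz0 (Real.exp_pos (Q z))
    linarith
  · have := hM' hx hz h
    rw [hx0, zero_mul] at this
    have := mul_pos hz0 (Real.exp_pos (-1 * Q z))
    linarith

theorem prufer {T ω : ℝ} (hT : 0 < T) (hω : 0 < ω) {q U V : ℝ → ℝ}
    (hq : IntervalIntegrable q volume 0 T) (hq0 : ∀ᵐ x, x ∈ Set.uIcc 0 T → 0 ≤ q x)
    (hU : ACD T U V) (hV : ACD T V (fun x => -((ω ^ 2 + q x) * U x)))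
    (hne : ∃ x ∈ Set.Icc 0 T, U x ≠ 0) :
    ∃ θ ρ : ℝ → ℝ, ACD T θ (fun x => ω + ω⁻¹ * q x * Real.sin (θ x) ^ 2) ∧
      ∀ x ∈ Set.Icc 0 T, 0 < ρ x ∧ V x = ρ x * Real.cos (θ x) ∧ ω * U x = ρ x * Real.sin (θ x) := by
  have hE := nonvanishing hT hω hq hq0 hU hV hne
  have hUc : ContinuousOn U (Set.uIcc 0 T) := hU.1.continuousOn
  have hVc : ContinuousOn V (Set.uIcc 0 T) := hV.1.continuousOn
  have hI : Set.uIcc 0 T = Set.Icc 0 T := Set.uIcc_of_le hT.le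
  have hEne : ∀ x ∈ Set.uIcc 0 T, ω ^ 2 * U x ^ 2 + V x ^ 2 ≠ 0 := by
    rw [hI]; exact fun x hx => (hE x hx).ne'
  have hi1 : IntervalIntegrable (fun x => ω + q x * (ω * U x ^ 2 / (ω ^ 2 * U x ^ 2 + V x ^ 2)))
      volume 0 T := by
    refine intervalIntegrable_const.add (hq.mul_continuousOn ?_)
    exact ContinuousOn.div (by fun_prop) (by fun_prop) hEne
  have hi2 : IntervalIntegrable (fun x => q x * (U x * V x / (ω ^ 2 * U x ^ 2 + V x ^ 2)))
      volume 0 T := by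
    refine (hq.mul_continuousOn ?_)
    exact ContinuousOn.div (by fun_prop) (by fun_prop) hEne
  set z : ℂ := ⟨V 0, ω * U 0⟩ with hz
  have hθ := ACD.of_integral (Complex.arg z) hi1
  have hK := ACD.of_integral 0 hi2
  set θ : ℝ → ℝ := fun x => Complex.arg z + ∫ t in (0:ℝ)..x,
    (ω + q t * (ω * U t ^ 2 / (ω ^ 2 * U t ^ 2 + V t ^ 2))) with hθd
  set K : ℝ → ℝ := fun x => 0 + ∫ t in (0:ℝ)..x,
    q t * (U t * V t / (ω ^ 2 * U t ^ 2 + V t ^ 2)) with hKd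
  have hsin := hθ.comp Real.hasDerivAt_sin Real.continuous_cos
  have hcos := hθ.comp Real.hasDerivAt_cos Real.continuous_sin.neg
  have hexp := hK.comp Real.hasDerivAt_exp Real.continuous_exp
  have hA := ((hV.mul hcos).add ((hU.const_mul ω).mul hsin)).mul hexp
  have hB := (((hU.const_mul ω).mul hcos).sub (hV.mul hsin)).mul hexp
  have hA' := fun {x : ℝ} => ACD.const_of_zero (x := x) hT hA (by
    refine Filter.Eventually.of_forall fun x hx => ?_
    have h := hEne x hx
    field_simp
    ring)
  have hB' := fun {x : ℝ} => ACD.const_of_zero (x := x) hT hB (by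
    refine Filter.Eventually.of_forall fun x hx => ?_
    have h := hEne x hx
    field_simp
    ring)
  have hz1 : ‖z‖ * Real.cos (θ 0) = V 0 := by
    simp only [hθd, intervalIntegral.integral_same, add_zero]
    rw [Complex.norm_mul_cos_arg]
  have hz2 : ‖z‖ * Real.sin (θ 0) = ω * U 0 := by
    simp only [hθd, intervalIntegral.integral_same, add_zero]
    rw [Complex.norm_mul_sin_arg]
  have hK0 : K 0 = 0 := by simp [hKd]
  have hzpos : 0 < ‖z‖ := by
    rw [norm_pos_iff]
    intro h0
    have h1 := hE 0 ⟨le_rfl, hT.le⟩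
    have h2 : V 0 = 0 := by rw [← hz1, h0]; simp
    have h3 : ω * U 0 = 0 := by rw [← hz2, h0]; simp
    have : ω ^ 2 * U 0 ^ 2 + V 0 ^ 2 = 0 := by rw [← mul_pow, h3, h2]; simp
    linarith
  have main : ∀ x ∈ Set.Icc 0 T, 0 < ‖z‖ * Real.exp (-K x) ∧
      V x = ‖z‖ * Real.exp (-K x) * Real.cos (θ x) ∧
      ω * U x = ‖z‖ * Real.exp (-K x) * Real.sin (θ x) := by
    intro x hx
    refine ⟨by positivity, ?_⟩
    have a1 := hA' hx
    have b1 := hB' hx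
    rw [hK0, Real.exp_zero, ← hz1, ← hz2] at a1 b1
    have a2 : V x * Real.cos (θ x) + ω * U x * Real.sin (θ x) = ‖z‖ * Real.exp (-K x) := by
      rw [Real.exp_neg]
      field_simp
      rw [a1]
      linear_combination ‖z‖ * Real.sin_sq_add_cos_sq (θ 0)
    have b2 : ω * U x * Real.cos (θ x) - V x * Real.sin (θ x) = 0 := by
      have : (ω * U x * Real.cos (θ x) - V x * Real.sin (θ x)) * Real.exp (K x) = 0 := by
        rw [b1]; ring
      exact (mul_eq_zero.mp this).resolve_right (Real.exp_pos _).ne'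
    constructor
    · linear_combination Real.cos (θ x) * a2 - Real.sin (θ x) * b2 -
        V x * Real.sin_sq_add_cos_sq (θ x)
    · linear_combination Real.sin (θ x) * a2 + Real.cos (θ x) * b2 -
        ω * U x * Real.sin_sq_add_cos_sq (θ x)
  refine ⟨θ, fun x => ‖z‖ * Real.exp (-K x), ⟨hθ.1, ?_⟩, main⟩
  filter_upwards [hθ.2] with x hx hxT
  convert hx hxT using 1
  have hE1 := hEne x hxT
  rw [hI] at hxT
  obtain ⟨h1, h2, h3⟩ := main x hxT
  have hE2 : ω ^ 2 * U x ^ 2 + V x ^ 2 = (‖z‖ * Real.exp (-K x)) ^ 2 := by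
    rw [← mul_pow, h3, h2]
    linear_combination (‖z‖ * Real.exp (-K x)) ^ 2 * Real.sin_sq_add_cos_sq (θ x)
  have h4 : Real.sin (θ x) = ω * U x / (‖z‖ * Real.exp (-K x)) := by
    rw [h3]; field_simp
  rw [hE2, h4]
  field_simp

theorem core {T ω : ℝ} (hT : 0 < T) (hω : 0 < ω) {q U V : ℝ → ℝ} (m : ℕ) (hm : Odd m)
    (hωT : ω * T = m * Real.pi)
    (hq : IntervalIntegrable q volume 0 T) (hq0 : ∀ᵐ x, x ∈ Set.uIcc 0 T → 0 ≤ q x)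
    (hqne : ¬ ∀ᵐ x, x ∈ Set.uIcc 0 T → q x = 0)
    (hU : ACD T U V) (hV : ACD T V (fun x => -((ω ^ 2 + q x) * U x)))
    (hne : ∃ x ∈ Set.Icc 0 T, U x ≠ 0) (hU0 : U 0 + U T = 0) (hV0 : V 0 + V T = 0) :
    2 * (m + 2) * ω * Real.cot (m * Real.pi / (2 * (m + 2))) < ∫ x in (0:ℝ)..T, q x := by
  obtain ⟨θ, ρ, hθ, hρ⟩ := prufer hT hω hq hq0 hU hV hne
  have hI : Set.uIcc 0 T = Set.Icc 0 T := Set.uIcc_of_le hT.le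
  have hθc : ContinuousOn θ (Set.Icc 0 T) := hI ▸ hθ.1.continuousOn
  have hmpos : 0 < (m : ℝ) := by exact_mod_cast hm.pos
  have hpi := Real.pi_pos
  -- total angle
  obtain ⟨k, hk⟩ : ∃ k : ℤ, (k : ℝ) * Real.pi = θ T - θ 0 := by
    rw [← Real.sin_eq_zero_iff]
    obtain ⟨r0, c0, s0⟩ := hρ 0 ⟨le_rfl, hT.le⟩
    obtain ⟨r1, c1, s1⟩ := hρ T ⟨hT.le, le_rfl⟩
    rw [Real.sin_sub]
    have h1 : U T = - U 0 := by linarith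
    have h2 : V T = - V 0 := by linarith
    have : ρ T * ρ 0 * (Real.sin (θ T) * Real.cos (θ 0) - Real.cos (θ T) * Real.sin (θ 0)) = 0 := by
      have : ρ T * ρ 0 * (Real.sin (θ T) * Real.cos (θ 0) - Real.cos (θ T) * Real.sin (θ 0)) =
        (ρ T * Real.sin (θ T)) * (ρ 0 * Real.cos (θ 0)) -
          (ρ T * Real.cos (θ T)) * (ρ 0 * Real.sin (θ 0)) := by ring
      rw [this, ← c0, ← c1, ← s0, ← s1, h1, h2]
      ring
    exact (mul_eq_zero.mp this).resolve_left (by positivity)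
  have hkodd : Odd k := by
    by_contra hcon
    rw [Int.not_odd_iff_even] at hcon
    obtain ⟨j, hj⟩ := hcon
    obtain ⟨r0, c0, s0⟩ := hρ 0 ⟨le_rfl, hT.le⟩
    obtain ⟨r1, c1, s1⟩ := hρ T ⟨hT.le, le_rfl⟩
    have hθT : θ T = θ 0 + j * (2 * Real.pi) := by
      rw [hj] at hk; push_cast at hk; linarith
    rw [hθT, Real.cos_add_int_mul_two_pi] at c1
    rw [hθT, Real.sin_add_int_mul_two_pi] at s1
    have a1 : (ρ 0 + ρ T) * Real.cos (θ 0) = 0 := by linear_combination hV0 - c0 - c1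
    have a2 : (ρ 0 + ρ T) * Real.sin (θ 0) = 0 := by linear_combination ω * hU0 - s0 - s1
    have b1 := (mul_eq_zero.mp a1).resolve_left (by positivity)
    have b2 := (mul_eq_zero.mp a2).resolve_left (by positivity)
    have := Real.sin_sq_add_cos_sq (θ 0)
    rw [b1, b2] at this
    norm_num at this
  -- monotonicity of the angle
  have hmono : ∀ x ∈ Set.Icc 0 T, ∀ y ∈ Set.Icc 0 T, x ≤ y → ω * (y - x) ≤ θ y - θ x := by
    intro x hx y hy hxy
    have hlin : ACD T (fun x : ℝ => 0 + ∫ t in (0:ℝ)..x, ω) (fun _ => ω) :=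
      ACD.of_integral 0 intervalIntegrable_const
    have := ACD.mono_of_nonneg hT (hθ.sub hlin) (by
      filter_upwards [hq0] with t ht htT
      have := ht htT
      have : 0 ≤ ω⁻¹ * q t * Real.sin (θ t) ^ 2 := by positivity
      linarith) hx hy hxy
    simp only [intervalIntegral.integral_const, smul_eq_mul] at this
    nlinarith
  obtain ⟨hθi, hθint⟩ := hθ.integral
  have hi2 : IntervalIntegrable (fun x => ω⁻¹ * q x * Real.sin (θ x) ^ 2) volume 0 T := by
    have := hθi.sub (intervalIntegrable_const (c := ω))
    simpa using this
  have hstrict : (m : ℝ) * Real.pi < θ T - θ 0 := by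
    have hge := hmono 0 ⟨le_rfl, hT.le⟩ T ⟨hT.le, le_rfl⟩ hT.le
    rw [sub_zero, hωT] at hge
    refine lt_of_le_of_ne hge fun heq => hqne ?_
    have h0 : ∫ x in (0:ℝ)..T, ω⁻¹ * q x * Real.sin (θ x) ^ 2 = 0 := by
      have := intervalIntegral.integral_add (intervalIntegrable_const (c := ω)) hi2
      rw [hθint, intervalIntegral.integral_const, sub_zero, smul_eq_mul, mul_comm T, hωT] at this
      linarith
    rw [intervalIntegral.integral_of_le hT.le] at h0
    rw [MeasureTheory.setIntegral_eq_zero_iff_of_nonneg_ae] at h0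
    · rw [Filter.EventuallyEq, ae_restrict_iff' measurableSet_Ioc] at h0
      have hcount : (Set.Icc 0 T ∩ θ ⁻¹' (Set.range fun k : ℤ => (k : ℝ) * Real.pi)).Countable := by
        apply Set.MapsTo.countable_of_injOn (f := θ) (t := Set.range fun k : ℤ => (k : ℝ) * Real.pi)
        · exact fun x hx => hx.2
        · intro x hx y hy hxy
          rcases le_total x y with h | h
          · have := hmono x hx.1 y hy.1 h
            nlinarith
          · have := hmono y hy.1 x hx.1 h
            nlinarith
        · exact Set.countable_range _
      have hnull := hcount.measure_zero volume
      rw [hI]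
      have hT0 : ∀ᵐ x : ℝ, x ≠ 0 := by simp [ae_iff]
      filter_upwards [h0, measure_eq_zero_iff_ae_notMem.mp hnull, hT0] with x h1 h2 h3 hx
      have h4 := h1 ⟨lt_of_le_of_ne hx.1 (Ne.symm h3), hx.2⟩
      have h5 : Real.sin (θ x) ≠ 0 := by
        intro h
        rw [Real.sin_eq_zero_iff] at h
        exact h2 ⟨hx, h⟩
      simpa [h5, hω.ne'] using h4
    · rw [Filter.EventuallyLE, ae_restrict_iff' measurableSet_Ioc]
      filter_upwards [hq0] with x hx hxT
      have := hx (hI ▸ Set.Ioc_subset_Icc_self hxT)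
      simp only [Pi.zero_apply]
      positivity
    · exact (intervalIntegrable_iff_integrableOn_Ioc_of_le hT.le).mp hi2
  have hkm : ((m + 2 : ℕ) : ℝ) * Real.pi ≤ θ T - θ 0 := by
    rw [← hk] at hstrict ⊢
    have : (m : ℝ) < k := lt_of_mul_lt_mul_right hstrict hpi.le
    have : (m : ℤ) < k := by exact_mod_cast this
    have h2 : ((m + 2 : ℕ) : ℤ) ≤ k := by
      obtain ⟨a, ha⟩ := hm
      obtain ⟨b, hb⟩ := hkodd
      push_cast
      omega
    have : ((m + 2 : ℕ) : ℝ) ≤ k := by exact_mod_cast h2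
    gcongr
  -- the weight
  set y : ℝ := m * Real.pi / (2 * (m + 2)) with hy
  have hy0 : 0 < y := by positivity
  have hy1 : y < Real.pi / 2 := by
    rw [hy, div_lt_div_iff₀ (by positivity) (by positivity)]
    nlinarith
  set s := Real.sin y with hs
  have hs0 : 0 < s := Real.sin_pos_of_pos_of_lt_pi hy0 (by linarith)
  have hs1 : s < 1 := by
    rw [hs, ← Real.sin_pi_div_two]
    exact Real.sin_lt_sin_of_lt_of_le_pi_div_two (by linarith) le_rfl hy1
  have hG := hθ.comp (fun t => Gw_primitive hs0 t) (Gw_cont hs0)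
  obtain ⟨hGi, hGint⟩ := hG.integral
  have hGc := Gw_cont hs0
  have hlow : ((m + 2 : ℕ) : ℝ) * (2 * y / s ^ 2 + 2 * Real.cot y) ≤
      ∫ x in (0:ℝ)..T, Gw s (θ x) * (ω + ω⁻¹ * q x * Real.sin (θ x) ^ 2) := by
    rw [hGint, intervalIntegral.integral_interval_sub_left (hGc.intervalIntegrable _ _)
      (hGc.intervalIntegrable _ _), ← Gw_int hy0 hy1 (θ 0)]
    rw [← intervalIntegral.integral_add_adjacent_intervals
      (b := θ 0 + ((m + 2 : ℕ) : ℝ) * Real.pi) (c := θ T) (hGc.intervalIntegrable _ _)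
      (hGc.intervalIntegrable _ _)]
    have : 0 ≤ ∫ t in (θ 0 + ((m + 2 : ℕ) : ℝ) * Real.pi)..(θ T), Gw s t :=
      intervalIntegral.integral_nonneg (by linarith) fun t _ => (Gw_pos hs0 t).le
    linarith
  -- strict comparison
  have hup : ∫ x in (0:ℝ)..T, Gw s (θ x) * (ω + ω⁻¹ * q x * Real.sin (θ x) ^ 2) <
      ∫ x in (0:ℝ)..T, (ω⁻¹ * q x + ω * (1 / s ^ 2)) := by
    have hle : ∀ᵐ x, x ∈ Set.Ioc 0 T → Gw s (θ x) * (ω + ω⁻¹ * q x * Real.sin (θ x) ^ 2) ≤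
        (ω⁻¹ * q x + ω * (1 / s ^ 2)) := by
      filter_upwards [hq0] with x hx hxT
      have h1 := hx (hI ▸ Set.Ioc_subset_Icc_self hxT)
      have h2 := mul_le_mul_of_nonneg_left (Gw_le hs0 (θ x)) hω.le
      have h3 : 0 ≤ ω⁻¹ * q x := by positivity
      have h4 := mul_le_mul_of_nonneg_left (Gw_mul_le hs0 (θ x)) h3
      linarith
    refine intervalIntegral.integral_lt_integral_of_ae_le_of_measure_setOfPred_lt_ne_zero hT.le hGi
      ((hq.const_mul _).add intervalIntegrable_const) 
      ((ae_restrict_iff' measurableSet_Ioc).mpr hle) ?_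
    -- find a point where sin² = 1
    obtain ⟨x0, hx0, hsx0⟩ : ∃ x0 ∈ Set.Ioo 0 T, Real.sin (θ x0) ^ 2 = 1 := by
      let j : ℤ := ⌊θ 0 / Real.pi - 1 / 2⌋ + 1
      have hj1 : θ 0 / Real.pi - 1 / 2 < j := by
        simp only [j]; push_cast; exact Int.lt_floor_add_one _
      have hj2 : (j : ℝ) ≤ θ 0 / Real.pi - 1 / 2 + 1 := by
        simp only [j]; push_cast; linarith [Int.floor_le (θ 0 / Real.pi - 1 / 2)]
      have hm1 : θ 0 < Real.pi / 2 + j * Real.pi := by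
        have : θ 0 / Real.pi < j + 1 / 2 := by linarith
        rw [div_lt_iff₀ hpi] at this
        linarith
      have hm2 : Real.pi / 2 + j * Real.pi < θ T := by
        have : (j : ℝ) - 1 / 2 ≤ θ 0 / Real.pi := by linarith
        rw [le_div_iff₀ hpi] at this
        push_cast at hkm
        nlinarith
      obtain ⟨x0, hx0, hx1⟩ := intermediate_value_Ioo hT.le hθc ⟨hm1, hm2⟩
      refine ⟨x0, hx0, ?_⟩
      rw [hx1]
      have : Real.cos (Real.pi / 2 + j * Real.pi) = 0 := by
        rw [Real.cos_eq_zero_iff]; exact ⟨j, by ring⟩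
      have h2 := Real.sin_sq_add_cos_sq (Real.pi / 2 + j * Real.pi)
      rw [this] at h2
      linarith
    have hopen : IsOpen (Set.Ioo 0 T ∩ (fun x => Real.sin (θ x) ^ 2) ⁻¹' Set.Ioi (s ^ 2)) := by
      apply ContinuousOn.isOpen_inter_preimage _ isOpen_Ioo isOpen_Ioi
      have := hθc.mono Set.Ioo_subset_Icc_self
      fun_prop
    have hpos := hopen.measure_pos volume ⟨x0, hx0, by
      simp only [Set.mem_preimage, Set.mem_Ioi, hsx0]; nlinarith⟩
    rw [Measure.restrict_apply' measurableSet_Ioc]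
    intro h0
    have hnz : ∀ᵐ x, x ∈ Set.Ioc 0 T → 0 ≤ q x := by
      filter_upwards [hq0] with x hx hxT
      exact hx (hI ▸ Set.Ioc_subset_Icc_self hxT)
    refine hpos.ne' (measure_mono_null_ae (Filter.mem_of_superset hnz ?_) h0)
    intro x hx hxs
    have hxI : x ∈ Set.Ioc 0 T := Set.Ioo_subset_Ioc_self hxs.1
    refine ⟨?_, hxI⟩
    have h1 := hx hxI
    have h2 := mul_lt_mul_of_pos_left (Gw_lt hs0 (θ x) hxs.2) hω
    have h3 : 0 ≤ ω⁻¹ * q x := by positivity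
    have h4 := mul_le_mul_of_nonneg_left (Gw_mul_le hs0 (θ x)) h3
    simp only [Set.mem_ofPred_eq]
    linarith
  rw [intervalIntegral.integral_add (hq.const_mul _) intervalIntegrable_const,
    intervalIntegral.integral_const, intervalIntegral.integral_const_mul, sub_zero,
    smul_eq_mul] at hup
  have hfin := lt_of_le_of_lt hlow hup
  have e1 : T * (ω * (1 / s ^ 2)) = ((m + 2 : ℕ) : ℝ) * (2 * y / s ^ 2) := by
    have : 2 * (m + 2) * y = ω * T := by
      rw [hωT, hy]; field_simp
    push_cast
    field_simp
    linarith
  rw [mul_add, e1] at hfin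
  have h5 : ((m + 2 : ℕ) : ℝ) * (2 * Real.cot y) < ω⁻¹ * ∫ x in (0:ℝ)..T, q x := by linarith
  have h6 := mul_lt_mul_of_pos_left h5 hω
  rw [mul_inv_cancel_left₀ hω.ne'] at h6
  push_cast at h6
  linarith

theorem part1 (T : ℝ) (hT : 0 < T) (n : ℕ) (hn : 1 ≤ n) (a : ℝ → ℝ) (ha : a ∈ LambdaTildeN T n) :
    betaT1 T n < ∫ x in (0:ℝ)..T, |a x - lamT T n| := by
  obtain ⟨⟨hmeas, hper, hint⟩, ⟨hle, hlt⟩, u, v, ⟨⟨hu, hv⟩, hu0, hv0⟩, hne⟩ := ha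
  have hI : Set.uIcc 0 T = Set.Icc 0 T := Set.uIcc_of_le hT.le
  have hle' : ∀ᵐ x, x ∈ Set.Icc 0 T → lamT T n ≤ a x :=
    (ae_restrict_iff' measurableSet_Icc).mp hle
  have hai : IntervalIntegrable a volume 0 T :=
    (intervalIntegrable_iff_integrableOn_Icc_of_le hT.le).mpr hint
  have huc : ContinuousOn u (Set.Icc 0 T) := fun x hx => (hu x hx).continuousWithinAt
  have haui : IntervalIntegrable (fun t => -(a t * u t)) volume 0 T :=
    (hai.mul_continuousOn (hI ▸ huc)).neg
  set V : ℝ → ℝ := fun x => v 0 + ∫ t in (0:ℝ)..x, -(a t * u t) with hVd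
  have hV := ACD.of_integral (v 0) haui
  have hVv : ∀ x ∈ Set.Icc 0 T, V x = v x := by
    intro x hx
    rw [hv x hx, hVd]
    simp only [intervalIntegral.integral_neg]
    ring
  have hVc : ContinuousOn V (Set.Icc 0 T) := hI ▸ hV.1.continuousOn
  have hVi : IntervalIntegrable V volume 0 T := (hI.symm ▸ hVc).intervalIntegrable
  set U : ℝ → ℝ := fun x => u 0 + ∫ t in (0:ℝ)..x, V t with hUd
  have hU := ACD.of_integral (u 0) hVi
  have hUu : ∀ x ∈ Set.Icc 0 T, U x = u x := by
    intro x hx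
    have hsub : Set.Icc 0 x ⊆ Set.Icc 0 T := Set.Icc_subset_Icc_right hx.2
    have : ∫ t in (0:ℝ)..x, V t = u x - u 0 := by
      apply intervalIntegral.integral_eq_sub_of_hasDerivAt_of_le hx.1 (huc.mono hsub)
      · intro t ht
        have htT : t ∈ Set.Icc 0 T := hsub (Set.Ioo_subset_Icc_self ht)
        rw [hVv t htT]
        exact (hu t htT).hasDerivAt (Icc_mem_nhds ht.1 (lt_of_lt_of_le ht.2 hx.2))
      · exact hVi.mono_set (by rw [hI, Set.uIcc_of_le hx.1]; exact hsub)
    simp only [hUd, this]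
    ring
  set ω : ℝ := (2 * (n : ℝ) - 1) * Real.pi / T with hω
  have hn' : (1 : ℝ) ≤ n := by exact_mod_cast hn
  have hωpos : 0 < ω := by
    have := Real.pi_pos
    have : 0 < 2 * (n : ℝ) - 1 := by linarith
    positivity
  have hlam : lamT T n = ω ^ 2 := by rw [hω, lamT]; field_simp
  have hmc : ((2 * n - 1 : ℕ) : ℝ) = 2 * (n : ℝ) - 1 := by
    rw [Nat.cast_sub (by omega)]; push_cast; ring
  have h0I : (0:ℝ) ∈ Set.Icc 0 T := ⟨le_rfl, hT.le⟩
  have hTI : T ∈ Set.Icc 0 T := ⟨hT.le, le_rfl⟩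
  have := core hT hωpos (q := fun x => a x - ω ^ 2) (U := U) (V := V) (2 * n - 1)
    ⟨n - 1, by omega⟩ (by rw [hmc, hω]; field_simp) (hai.sub intervalIntegrable_const)
    (by
      rw [hI]
      filter_upwards [hle'] with x hx hxT
      have := hx hxT
      rw [hlam] at this
      linarith)
    (by
      intro h
      rw [hI] at h
      refine hlt.ne' (measure_mono_null ?_ h)
      intro x hx h2
      have := h2 hx.1
      have := hx.2
      rw [hlam] at this
      linarith) hU
    ⟨hV.1, by
      filter_upwards [hV.2] with x hx hxT
      convert hx hxT using 1
      rw [hUu x (hI ▸ hxT)]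
      ring⟩
    (by
      obtain ⟨x, hx, hx2⟩ := hne
      exact ⟨x, hx, by rwa [hUu x hx]⟩)
    (by rw [hUu 0 h0I, hUu T hTI, hu0]) (by rw [hVv 0 h0I, hVv T hTI, hv0])
  have e : ∫ x in (0:ℝ)..T, |a x - lamT T n| = ∫ x in (0:ℝ)..T, (a x - ω ^ 2) := by
    apply intervalIntegral.integral_congr_ae
    filter_upwards [hle'] with x hx hxT
    rw [Set.uIoc_of_le hT.le] at hxT
    have := hx (Set.Ioc_subset_Icc_self hxT)
    rw [abs_of_nonneg (by linarith), hlam]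
  rw [e]
  refine lt_of_eq_of_lt ?_ this
  rw [hmc, betaT1, hω, show 2 * (n : ℝ) - 1 + 2 = 2 * n + 1 by ring]
  ring

/-- Smoothed triangle wave. -/
noncomputable def S0 (r X : ℝ) : ℝ := Real.arcsin (r * Real.sin X)

/-- The positive quantity under the root. -/
noncomputable def Dd (r X : ℝ) : ℝ := 1 - (r * Real.sin X) ^ 2

/-- First derivative of `S0`. -/
noncomputable def S1 (r X : ℝ) : ℝ := r * Real.cos X / √(Dd r X)

/-- Second derivative of `S0`. -/
noncomputable def S2 (r X : ℝ) : ℝ := -((1 - r ^ 2) * (r * Real.sin X) / (Dd r X * √(Dd r X)))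

theorem rsin_lt {r : ℝ} (h0 : 0 < r) (h1 : r < 1) (X : ℝ) :
    -1 < r * Real.sin X ∧ r * Real.sin X < 1 := by
  constructor
  · nlinarith [Real.neg_one_le_sin X, Real.sin_le_one X]
  · nlinarith [Real.neg_one_le_sin X, Real.sin_le_one X]

theorem Dd_pos {r : ℝ} (h0 : 0 < r) (h1 : r < 1) (X : ℝ) : 0 < Dd r X := by
  obtain ⟨a, b⟩ := rsin_lt h0 h1 X
  unfold Dd
  nlinarith

theorem S0_deriv {r : ℝ} (h0 : 0 < r) (h1 : r < 1) (X : ℝ) : HasDerivAt (S0 r) (S1 r X) X := by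
  obtain ⟨a, b⟩ := rsin_lt h0 h1 X
  have := (Real.hasDerivAt_arcsin a.ne' b.ne).comp X ((Real.hasDerivAt_sin X).const_mul r)
  refine HasDerivAt.congr_deriv (f := S0 r) this ?_
  rw [S1, Dd]; ring

theorem S1_deriv {r : ℝ} (h0 : 0 < r) (h1 : r < 1) (X : ℝ) : HasDerivAt (S1 r) (S2 r X) X := by
  have hD := Dd_pos h0 h1 X
  have hDd : HasDerivAt (Dd r) (-(2 * (r * Real.sin X) * (r * Real.cos X))) X := by
    have := (((Real.hasDerivAt_sin X).const_mul r).pow 2).const_sub 1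
    refine HasDerivAt.congr_deriv (f := Dd r) this ?_
    push_cast; ring
  have hs := hDd.sqrt hD.ne'
  have := ((Real.hasDerivAt_cos X).const_mul r).div hs (Real.sqrt_pos.mpr hD).ne'
  refine HasDerivAt.congr_deriv (f := S1 r) this ?_
  have hsq := Real.sq_sqrt hD.le
  have hsp := Real.sqrt_pos.mpr hD
  rw [S2]
  generalize √(Dd r X) = w at *
  rw [← hsq]
  field_simp
  have e : w ^ 2 = 1 - (r * Real.sin X) ^ 2 := by rw [hsq]; rfl
  have e2 : Real.cos X ^ 2 = 1 - Real.sin X ^ 2 := by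
    linarith [Real.sin_sq_add_cos_sq X]
  rw [e]
  linear_combination (r ^ 2 * Real.sin X) * e2

theorem Dd_cont (r : ℝ) : Continuous (Dd r) := by unfold Dd; fun_prop

theorem S1_cont {r : ℝ} (h0 : 0 < r) (h1 : r < 1) : Continuous (S1 r) :=
  continuous_iff_continuousAt.mpr fun X => (S1_deriv h0 h1 X).continuousAt

theorem S0_cont {r : ℝ} (h0 : 0 < r) (h1 : r < 1) : Continuous (S0 r) :=
  continuous_iff_continuousAt.mpr fun X => (S0_deriv h0 h1 X).continuousAt

theorem S2_cont {r : ℝ} (h0 : 0 < r) (h1 : r < 1) : Continuous (S2 r) := by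
  unfold S2
  have := Dd_cont r
  refine (Continuous.div (by fun_prop) (by fun_prop) fun X => ?_).neg
  have := Dd_pos h0 h1 X
  positivity

theorem S1_sq {r : ℝ} (h0 : 0 < r) (h1 : r < 1) (X : ℝ) : 1 - S1 r X ^ 2 = (1 - r ^ 2) / Dd r X := by
  have hD := Dd_pos h0 h1 X
  rw [S1, div_pow, Real.sq_sqrt hD.le, eq_div_iff hD.ne', sub_mul, div_mul_cancel₀ _ hD.ne', Dd]
  nlinarith [Real.sin_sq_add_cos_sq X]

theorem S2_tan {r : ℝ} (X : ℝ) :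
    S2 r X = -((1 - r ^ 2) / Dd r X * Real.tan (S0 r X)) := by
  rw [S2, S0, Real.tan_arcsin, ← Dd, div_mul_div_comm]

theorem S0_mem {r : ℝ} (h0 : 0 < r) (h1 : r < 1) (X : ℝ) :
    -(Real.pi / 2) < S0 r X ∧ S0 r X < Real.pi / 2 := by
  obtain ⟨a, b⟩ := rsin_lt h0 h1 X
  exact ⟨Real.neg_pi_div_two_lt_arcsin.mpr a, Real.arcsin_lt_pi_div_two.mpr b⟩

theorem int_S2 {r : ℝ} (h0 : 0 < r) (h1 : r < 1) :
    ∫ X in (0:ℝ)..Real.pi, |S2 r X| = 2 * r := by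
  have : ∫ X in (0:ℝ)..Real.pi, |S2 r X| = ∫ X in (0:ℝ)..Real.pi, -S2 r X := by
    apply intervalIntegral.integral_congr
    intro X hX
    rw [Set.uIcc_of_le Real.pi_pos.le] at hX
    have := Real.sin_nonneg_of_nonneg_of_le_pi hX.1 hX.2
    have := Dd_pos h0 h1 X
    have : S2 r X ≤ 0 := by
      have : 0 < 1 - r ^ 2 := by nlinarith
      unfold S2
      rw [neg_nonpos]
      positivity
    simp only
    rw [abs_of_nonpos this]
  rw [this, intervalIntegral.integral_neg, intervalIntegral.integral_eq_sub_of_hasDerivAt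
    (fun X _ => S1_deriv h0 h1 X) ((S2_cont h0 h1).intervalIntegrable _ _)]
  simp [S1, Dd]
  ring

theorem S1_periodic (r : ℝ) : Function.Periodic (fun X => 1 - S1 r X ^ 2) Real.pi := by
  intro X
  simp [S1, Dd, Real.sin_add_pi, Real.cos_add_pi, neg_div]

theorem S2_periodic (r : ℝ) : Function.Periodic (fun X => |S2 r X|) Real.pi := by
  intro X
  simp [S2, Dd, Real.sin_add_pi, neg_div]

theorem int_S1 {δ : ℝ} (h0 : 0 < δ) (h1 : δ < Real.pi / 2) :
    ∫ X in (0:ℝ)..Real.pi, (1 - S1 (Real.cos δ) X ^ 2) ≤ 4 * δ := by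
  have hr0 : 0 < Real.cos δ := Real.cos_pos_of_mem_Ioo ⟨by linarith, h1⟩
  have hr1 : Real.cos δ < 1 := by
    rw [← Real.cos_zero]
    exact Real.cos_lt_cos_of_nonneg_of_le_pi le_rfl (by linarith) h0
  have hper := (S1_periodic (Real.cos δ)).intervalIntegral_add_eq 0 (-(Real.pi / 2))
  rw [zero_add, show -(Real.pi / 2) + Real.pi = Real.pi / 2 by ring] at hper
  rw [hper]
  have hc := S1_cont hr0 hr1
  calc ∫ X in (-(Real.pi / 2))..(Real.pi / 2), (1 - S1 (Real.cos δ) X ^ 2)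
      ≤ ∫ X in (-(Real.pi / 2))..(Real.pi / 2), (2 - 2 * S1 (Real.cos δ) X) := by
        apply intervalIntegral.integral_mono_on (by linarith)
        · exact Continuous.intervalIntegrable (by fun_prop) _ _
        · exact Continuous.intervalIntegrable (by fun_prop) _ _
        · intro X _
          nlinarith [sq_nonneg (S1 (Real.cos δ) X - 1)]
    _ = 4 * δ := by
        rw [intervalIntegral.integral_sub intervalIntegrable_const
          (Continuous.intervalIntegrable (by fun_prop) _ _), intervalIntegral.integral_const,
          intervalIntegral.integral_const_mul, intervalIntegral.integral_eq_sub_of_hasDerivAt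
          (fun X _ => S0_deriv hr0 hr1 X) (hc.intervalIntegrable _ _)]
        simp only [S0, Real.sin_neg, Real.sin_pi_div_two, mul_one, mul_neg, Real.arcsin_neg,
          smul_eq_mul]
        have : Real.arcsin (Real.cos δ) = Real.pi / 2 - δ := by
          rw [← Real.sin_pi_div_two_sub, Real.arcsin_sin] <;> linarith
        rw [this]
        ring

theorem hbound_pos {ρ σ : ℝ} (hρ0 : 0 < ρ) (hρ1 : ρ < 1) (h0 : 0 < σ) (h1 : σ < Real.pi / 2) :
    1 ≤ Real.tan σ * Real.cos (ρ * σ) / Real.sin (ρ * σ) ∧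
    Real.tan σ * Real.cos (ρ * σ) / Real.sin (ρ * σ) ≤
      Real.cot (ρ * Real.pi / 2) * Real.tan σ +
        (Real.pi / 2) ^ 2 / (ρ * Real.sin (ρ * Real.pi / 2)) := by
  have hpi := Real.pi_pos
  have hlt : ρ * σ < σ := by nlinarith
  have hps : 0 < ρ * σ := by positivity
  have hs : 0 < Real.sin (ρ * σ) := Real.sin_pos_of_pos_of_lt_pi hps (by linarith)
  have hc : 0 < Real.cos (ρ * σ) := Real.cos_pos_of_mem_Ioo ⟨by linarith, by linarith⟩
  have hc' : 0 < Real.cos σ := Real.cos_pos_of_mem_Ioo ⟨by linarith, by linarith⟩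
  have hB : 0 < ρ * Real.pi / 2 := by positivity
  have hB2 : ρ * Real.pi / 2 < Real.pi / 2 := by nlinarith
  have hsB : 0 < Real.sin (ρ * Real.pi / 2) := Real.sin_pos_of_pos_of_lt_pi hB (by linarith)
  constructor
  · rw [le_div_iff₀ hs, one_mul]
    have := Real.tan_lt_tan_of_lt_of_lt_pi_div_two (by linarith) h1 hlt
    rw [Real.tan_eq_sin_div_cos (ρ * σ), div_lt_iff₀ hc] at this
    exact this.le
  · have e : Real.tan σ * Real.cos (ρ * σ) / Real.sin (ρ * σ) -
        Real.cot (ρ * Real.pi / 2) * Real.tan σ =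
        Real.tan σ * Real.sin (ρ * Real.pi / 2 - ρ * σ) /
          (Real.sin (ρ * σ) * Real.sin (ρ * Real.pi / 2)) := by
      rw [Real.cot_eq_cos_div_sin, Real.sin_sub]
      field_simp
    have h2 : Real.sin (ρ * Real.pi / 2 - ρ * σ) ≤ Real.pi / 2 * Real.cos σ := by
      have h3 : Real.sin (ρ * Real.pi / 2 - ρ * σ) ≤ ρ * Real.pi / 2 - ρ * σ :=
        Real.sin_le (by nlinarith)
      have h4 := Real.mul_le_sin (x := Real.pi / 2 - σ) (by linarith) (by linarith)
      rw [Real.sin_pi_div_two_sub] at h4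
      have h5 : Real.pi / 2 * (2 / Real.pi * (Real.pi / 2 - σ)) = Real.pi / 2 - σ := by field_simp
      have h6 := mul_le_mul_of_nonneg_left h4 (by positivity : 0 ≤ Real.pi / 2)
      rw [h5] at h6
      nlinarith
    have h7 : Real.tan σ * Real.sin (ρ * Real.pi / 2 - ρ * σ) ≤ Real.pi / 2 * σ := by
      have ht : 0 < Real.tan σ := Real.tan_pos_of_pos_of_lt_pi_div_two h0 h1
      have h8 := mul_le_mul_of_nonneg_left h2 ht.le
      have h9 : Real.tan σ * (Real.pi / 2 * Real.cos σ) = Real.pi / 2 * Real.sin σ := by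
        rw [Real.tan_eq_sin_div_cos]; field_simp
      rw [h9] at h8
      have := Real.sin_le h0.le
      nlinarith
    have h10 := Real.mul_le_sin hps.le (by linarith)
    have h11 : Real.tan σ * Real.sin (ρ * Real.pi / 2 - ρ * σ) /
          (Real.sin (ρ * σ) * Real.sin (ρ * Real.pi / 2)) ≤
          (Real.pi / 2) ^ 2 / (ρ * Real.sin (ρ * Real.pi / 2)) := by
      rw [div_le_div_iff₀ (by positivity) (by positivity)]
      have h12 : Real.pi / 2 * σ * ρ ≤ (Real.pi / 2) ^ 2 * Real.sin (ρ * σ) := by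
        have := mul_le_mul_of_nonneg_left h10 (by positivity : 0 ≤ (Real.pi / 2) ^ 2)
        have e5 : (Real.pi / 2) ^ 2 * (2 / Real.pi * (ρ * σ)) = Real.pi / 2 * σ * ρ := by field_simp
        linarith
      have h13 := mul_le_mul_of_nonneg_right h7 hρ0.le
      have h14 := mul_le_mul_of_nonneg_right (h13.trans h12) hsB.le
      linarith
    linarith

theorem hbound {ρ σ : ℝ} (hρ0 : 0 < ρ) (hρ1 : ρ < 1) (hne : σ ≠ 0) (h0 : -(Real.pi / 2) < σ)
    (h1 : σ < Real.pi / 2) :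
    1 ≤ Real.tan σ * Real.cos (ρ * σ) / Real.sin (ρ * σ) ∧
    Real.tan σ * Real.cos (ρ * σ) / Real.sin (ρ * σ) ≤
      Real.cot (ρ * Real.pi / 2) * |Real.tan σ| +
        (Real.pi / 2) ^ 2 / (ρ * Real.sin (ρ * Real.pi / 2)) := by
  rcases lt_or_gt_of_ne hne with h | h
  · have := hbound_pos hρ0 hρ1 (σ := -σ) (by linarith) (by linarith)
    have ht : 0 < Real.tan (-σ) := Real.tan_pos_of_pos_of_lt_pi_div_two (by linarith) (by linarith)
    rw [← abs_neg, ← Real.tan_neg, abs_of_pos ht]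
    simpa [Real.tan_neg, neg_div_neg_eq] using this
  · have := hbound_pos hρ0 hρ1 h h1
    rwa [abs_of_pos (Real.tan_pos_of_pos_of_lt_pi_div_two h h1)]

theorem S0_add_odd (r X : ℝ) {N : ℕ} (hN : Odd N) : S0 r (X + N * Real.pi) = - S0 r X := by
  simp [S0, Real.sin_add_nat_mul_pi, hN.neg_one_pow]

theorem Dd_add_odd (r X : ℝ) {N : ℕ} (hN : Odd N) : Dd r (X + N * Real.pi) = Dd r X := by
  simp [Dd, Real.sin_add_nat_mul_pi, hN.neg_one_pow]

theorem S1_add_odd (r X : ℝ) {N : ℕ} (hN : Odd N) : S1 r (X + N * Real.pi) = - S1 r X := by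
  simp [S1, Dd_add_odd r X hN, Real.cos_add_nat_mul_pi, hN.neg_one_pow, neg_div]

theorem S2_add_odd (r X : ℝ) {N : ℕ} (hN : Odd N) : S2 r (X + N * Real.pi) = - S2 r X := by
  simp [S2, Dd_add_odd r X hN, Real.sin_add_nat_mul_pi, hN.neg_one_pow, neg_div]

/-- The normalised second derivative of `sin (ρ * S0)`. -/
noncomputable def Wf (ρ r X : ℝ) : ℝ :=
  ρ * S2 r X * Real.cos (ρ * S0 r X) - ρ ^ 2 * S1 r X ^ 2 * Real.sin (ρ * S0 r X)

open Classical in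
/-- The normalised potential. -/
noncomputable def Af (C ρ r X : ℝ) : ℝ :=
  if Real.sin (ρ * S0 r X) = 0 then ρ ^ 2 + ρ * C * (1 - S1 r X ^ 2)
  else -(Wf ρ r X) / Real.sin (ρ * S0 r X)

theorem Wf_cont {ρ r : ℝ} (h0 : 0 < r) (h1 : r < 1) : Continuous (Wf ρ r) := by
  have := S0_cont h0 h1
  have := S1_cont h0 h1
  have := S2_cont h0 h1
  unfold Wf; fun_prop

theorem Af_meas {C ρ r : ℝ} (h0 : 0 < r) (h1 : r < 1) : Measurable (Af C ρ r) := by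
  have c0 := (S0_cont h0 h1).measurable
  have c1 := (S1_cont h0 h1).measurable
  have c2 := (Wf_cont (ρ := ρ) h0 h1).measurable
  unfold Af
  refine Measurable.ite ?_ (by fun_prop) (by fun_prop)
  exact measurableSet_eq_fun (by fun_prop) measurable_const

theorem sin_zero_S0 {ρ r X : ℝ} (hρ0 : 0 < ρ) (hρ1 : ρ < 1) (h0 : 0 < r) (h1 : r < 1)
    (h : Real.sin (ρ * S0 r X) = 0) : S0 r X = 0 := by
  obtain ⟨a, b⟩ := S0_mem h0 h1 X
  have hpi := Real.pi_pos
  have := (Real.sin_eq_zero_iff_of_lt_of_lt (x := ρ * S0 r X) (by nlinarith) (by nlinarith)).mp h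
  exact (mul_eq_zero.mp this).resolve_left hρ0.ne'

theorem Af_mul {C ρ r : ℝ} (hρ0 : 0 < ρ) (hρ1 : ρ < 1) (h0 : 0 < r) (h1 : r < 1) (X : ℝ) :
    Af C ρ r X * Real.sin (ρ * S0 r X) = - Wf ρ r X := by
  unfold Af
  split_ifs with h
  · have h2 := sin_zero_S0 hρ0 hρ1 h0 h1 h
    rw [h, Wf, h, S2_tan, h2]
    simp
  · field_simp

theorem Af_bound {ρ r : ℝ} (hρ0 : 0 < ρ) (hρ1 : ρ < 1) (h0 : 0 < r) (h1 : r < 1) (X : ℝ) :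
    0 < Af ((Real.pi / 2) ^ 2 / (ρ * Real.sin (ρ * Real.pi / 2))) ρ r X - ρ ^ 2 ∧
    Af ((Real.pi / 2) ^ 2 / (ρ * Real.sin (ρ * Real.pi / 2))) ρ r X - ρ ^ 2 ≤
      ρ * Real.cot (ρ * Real.pi / 2) * |S2 r X| +
      ρ * ((Real.pi / 2) ^ 2 / (ρ * Real.sin (ρ * Real.pi / 2))) * (1 - S1 r X ^ 2) := by
  have hpi := Real.pi_pos
  have hsB : 0 < Real.sin (ρ * Real.pi / 2) :=
    Real.sin_pos_of_pos_of_lt_pi (by positivity) (by nlinarith)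
  have hcB : 0 < Real.cos (ρ * Real.pi / 2) :=
    Real.cos_pos_of_mem_Ioo ⟨by nlinarith [mul_pos hρ0 hpi], by nlinarith⟩
  have hcot : 0 < Real.cot (ρ * Real.pi / 2) := by
    rw [Real.cot_eq_cos_div_sin]; positivity
  set C := (Real.pi / 2) ^ 2 / (ρ * Real.sin (ρ * Real.pi / 2)) with hC
  have hCpos : 0 < C := by positivity
  have hD := Dd_pos h0 h1 X
  have hr : 0 < 1 - r ^ 2 := by nlinarith
  have hq : 0 < (1 - r ^ 2) / Dd r X := by positivity
  have hS1 := S1_sq h0 h1 X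
  unfold Af
  split_ifs with h
  · rw [hS1]
    constructor
    · have : 0 < ρ * C * ((1 - r ^ 2) / Dd r X) := by positivity
      linarith
    · have : 0 ≤ ρ * Real.cot (ρ * Real.pi / 2) * |S2 r X| := by positivity
      linarith
  · obtain ⟨a, b⟩ := S0_mem h0 h1 X
    have hne : S0 r X ≠ 0 := fun h' => h (by rw [h']; simp)
    obtain ⟨l, u⟩ := hbound hρ0 hρ1 hne a b
    have e : -(Wf ρ r X) / Real.sin (ρ * S0 r X) - ρ ^ 2 = ((1 - r ^ 2) / Dd r X) *
        (ρ * (Real.tan (S0 r X) * Real.cos (ρ * S0 r X) / Real.sin (ρ * S0 r X)) - ρ ^ 2) := by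
      have hS1' : S1 r X ^ 2 = 1 - (1 - r ^ 2) / Dd r X := by linarith
      rw [Wf, S2_tan, hS1']
      generalize (1 - r ^ 2) / Dd r X = p
      field_simp
      ring
    rw [e]
    constructor
    · apply mul_pos hq
      nlinarith
    · have habs : |S2 r X| = (1 - r ^ 2) / Dd r X * |Real.tan (S0 r X)| := by
        rw [S2_tan, abs_neg, abs_mul, abs_of_pos hq]
      rw [habs, hS1]
      have := mul_le_mul_of_nonneg_left u (mul_pos hq hρ0).le
      nlinarith [mul_pos hq (pow_pos hρ0 2)]

theorem exists_near (T : ℝ) (hT : 0 < T) (n : ℕ) (hn : 1 ≤ n) (ε : ℝ) (hε : 0 < ε) :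
    ∃ a ∈ LambdaTildeN T n, (∫ x in (0:ℝ)..T, |a x - lamT T n|) < betaT1 T n + ε := by
  have hpi := Real.pi_pos
  have hn' : (1 : ℝ) ≤ n := by exact_mod_cast hn
  set N : ℕ := 2 * n + 1 with hN
  have hNodd : Odd N := ⟨n, rfl⟩
  have hNpos : (0 : ℝ) < N := by positivity
  have hNc : (N : ℝ) = 2 * n + 1 := by rw [hN]; push_cast; ring
  set ρ : ℝ := (2 * n - 1) / N with hρ
  have hρ0 : 0 < ρ := div_pos (by linarith) hNpos
  have hρ1 : ρ < 1 := by rw [hρ, div_lt_one hNpos, hNc]; linarith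
  set κ : ℝ := N * Real.pi / T with hκ
  have hκ0 : 0 < κ := by positivity
  have hκT : κ * T = N * Real.pi := by rw [hκ]; field_simp
  have hsB : 0 < Real.sin (ρ * Real.pi / 2) :=
    Real.sin_pos_of_pos_of_lt_pi (by positivity) (by nlinarith)
  have hcB : 0 < Real.cos (ρ * Real.pi / 2) :=
    Real.cos_pos_of_mem_Ioo ⟨by nlinarith [mul_pos hρ0 hpi], by nlinarith⟩
  have hcot : 0 < Real.cot (ρ * Real.pi / 2) := by
    rw [Real.cot_eq_cos_div_sin]; positivity
  set C := (Real.pi / 2) ^ 2 / (ρ * Real.sin (ρ * Real.pi / 2)) with hC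
  have hCpos : 0 < C := by positivity
  have hlam : lamT T n = κ ^ 2 * ρ ^ 2 := by
    rw [lamT, hκ, hρ]; field_simp
  have hbeta : betaT1 T n = κ * (N * (ρ * Real.cot (ρ * Real.pi / 2) * 2)) := by
    have e1 : (2 * (n : ℝ) - 1) * Real.pi / (2 * (2 * (n : ℝ) + 1)) = ρ * Real.pi / 2 := by
      rw [hρ, hNc]; field_simp
    rw [betaT1, e1, ← hNc]
    have e2 : 2 * (n : ℝ) - 1 = ρ * N := by rw [hρ]; field_simp
    rw [e2, hκ]
    field_simp
  -- choice of δ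
  obtain ⟨δ, hδ0, hδ1, hδ2⟩ : ∃ δ : ℝ, 0 < δ ∧ δ < Real.pi / 2 ∧ κ * (N * (ρ * C * (4 * δ))) < ε := by
    have hM : 0 < κ * (N * (ρ * C * 4)) := by positivity
    refine ⟨min (Real.pi / 4) (ε / (2 * (κ * (N * (ρ * C * 4))))), by positivity,
      lt_of_le_of_lt (min_le_left _ _) (by linarith), ?_⟩
    have h1 := min_le_right (Real.pi / 4) (ε / (2 * (κ * (N * (ρ * C * 4)))))
    have h2 := mul_le_mul_of_nonneg_left h1 hM.le
    have h3 : κ * (N * (ρ * C * 4)) * (ε / (2 * (κ * (N * (ρ * C * 4))))) = ε / 2 := by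
      field_simp
    rw [h3] at h2
    linarith
  set r := Real.cos δ with hr
  have h0 : 0 < r := Real.cos_pos_of_mem_Ioo ⟨by linarith, hδ1⟩
  have h1 : r < 1 := by
    rw [hr, ← Real.cos_zero]
    exact Real.cos_lt_cos_of_nonneg_of_le_pi le_rfl (by linarith) hδ0
  have cS0 := S0_cont h0 h1
  have cS1 := S1_cont h0 h1
  have cS2 := S2_cont h0 h1
  set b : ℝ → ℝ := fun X => ρ * Real.cot (ρ * Real.pi / 2) * |S2 r X| +
      ρ * C * (1 - S1 r X ^ 2) with hb
  have cb : Continuous b := by rw [hb]; fun_prop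
  have hbnd := Af_bound hρ0 hρ1 h0 h1
  rw [← hC] at hbnd
  have hshift : ∀ x, κ * (x + T) = κ * x + N * Real.pi := fun x => by rw [mul_add, hκT]
  have hdσ : ∀ x, HasDerivAt (fun x => S0 r (κ * x)) (S1 r (κ * x) * κ) x := fun x => by
    have h := (S0_deriv h0 h1 (κ * x)).comp x ((hasDerivAt_id x).const_mul κ)
    simpa [Function.comp_def] using h
  have hdσ1 : ∀ x, HasDerivAt (fun x => S1 r (κ * x)) (S2 r (κ * x) * κ) x := fun x => by
    have h := (S1_deriv h0 h1 (κ * x)).comp x ((hasDerivAt_id x).const_mul κ)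
    simpa [Function.comp_def] using h
  have hdu : ∀ x, HasDerivAt (fun x => Real.sin (ρ * S0 r (κ * x)))
      (ρ * κ * S1 r (κ * x) * Real.cos (ρ * S0 r (κ * x))) x := fun x =>
    ((hdσ x).const_mul ρ).sin.congr_deriv (by ring)
  have hdv : ∀ x, HasDerivAt (fun x => ρ * κ * S1 r (κ * x) * Real.cos (ρ * S0 r (κ * x)))
      (κ ^ 2 * Wf ρ r (κ * x)) x := fun x =>
    (((hdσ1 x).const_mul (ρ * κ)).mul ((hdσ x).const_mul ρ).cos).congr_deriv
      (by rw [Wf]; ring)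
  have hmeas : Measurable fun x => κ ^ 2 * Af C ρ r (κ * x) :=
    ((Af_meas h0 h1).comp (measurable_const_mul κ)).const_mul _
  have habs : ∀ x, |κ ^ 2 * Af C ρ r (κ * x) - lamT T n| ≤ κ ^ 2 * b (κ * x) := by
    intro x
    obtain ⟨l, u⟩ := hbnd (κ * x)
    rw [hlam, ← mul_sub, abs_of_pos (by positivity)]
    gcongr
  have hdiffint : IntervalIntegrable (fun x => κ ^ 2 * Af C ρ r (κ * x) - lamT T n) volume 0 T := by
    refine IntervalIntegrable.mono_fun' (g := fun x => κ ^ 2 * b (κ * x))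
      (Continuous.intervalIntegrable (by fun_prop) _ _)
      (hmeas.sub_const _).aestronglyMeasurable ?_
    exact Filter.Eventually.of_forall fun x => by simpa using habs x
  have hint : IntervalIntegrable (fun x => κ ^ 2 * Af C ρ r (κ * x)) volume 0 T := by
    have := hdiffint.add (intervalIntegrable_const (c := lamT T n))
    simpa using this
  refine ⟨fun x => κ ^ 2 * Af C ρ r (κ * x), ⟨⟨hmeas, ?_, ?_⟩, ⟨?_, ?_⟩,
    fun x => Real.sin (ρ * S0 r (κ * x)),
    fun x => ρ * κ * S1 r (κ * x) * Real.cos (ρ * S0 r (κ * x)), ⟨⟨?_, ?_⟩, ?_, ?_⟩, ?_⟩, ?_⟩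
  · intro x
    simp only [hshift, Af, Wf, S0_add_odd r _ hNodd, S1_add_odd r _ hNodd, S2_add_odd r _ hNodd,
      mul_neg, Real.sin_neg, Real.cos_neg, neg_eq_zero, neg_sq]
    congr 1
    split_ifs with h
    · rfl
    · field_simp
      ring
  · exact (intervalIntegrable_iff_integrableOn_Icc_of_le hT.le).mp hint
  · refine Filter.Eventually.of_forall fun x => ?_
    have := mul_pos (pow_pos hκ0 2) (hbnd (κ * x)).1
    simp only [hlam]
    nlinarith
  · have : {x ∈ Set.Icc 0 T | lamT T n < κ ^ 2 * Af C ρ r (κ * x)} = Set.Icc 0 T := by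
      ext x
      simp only [Set.mem_ofPred_eq, and_iff_left_iff_imp]
      intro _
      have := mul_pos (pow_pos hκ0 2) (hbnd (κ * x)).1
      rw [hlam]
      nlinarith
    rw [this, Real.volume_Icc]
    simpa using hT
  · exact fun x _ => (hdu x).hasDerivWithinAt
  · intro x _
    have e : ∀ t, κ ^ 2 * Af C ρ r (κ * t) * Real.sin (ρ * S0 r (κ * t)) =
        -(κ ^ 2 * Wf ρ r (κ * t)) := fun t => by
      rw [mul_assoc, Af_mul hρ0 hρ1 h0 h1]; ring
    simp only [e]
    have cW := Wf_cont (ρ := ρ) h0 h1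
    rw [intervalIntegral.integral_neg, intervalIntegral.integral_eq_sub_of_hasDerivAt
      (fun t _ => hdv t) (Continuous.intervalIntegrable (by fun_prop) _ _)]
    ring
  · have := hshift 0
    simp only [zero_add] at this
    simp [this, S0]
  · have := hshift 0
    rw [zero_add] at this
    simp only [this, S0_add_odd r _ hNodd, S1_add_odd r _ hNodd, mul_neg, Real.cos_neg]
    ring
  · refine ⟨Real.pi / 2 / κ, ⟨by positivity, ?_⟩, fun h => ?_⟩
    · rw [div_le_iff₀ hκ0, mul_comm, hκT, hNc]
      nlinarith
    · have := sin_zero_S0 hρ0 hρ1 h0 h1 h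
      rw [mul_div_cancel₀ _ hκ0.ne', S0, Real.sin_pi_div_two, mul_one, Real.arcsin_eq_zero_iff] at this
      linarith
  · have hper : Function.Periodic b Real.pi := by
      intro X
      have e1 := S1_periodic r X
      have e2 := S2_periodic r X
      simp only at e1 e2
      simp only [hb, e1, e2]
    calc ∫ x in (0:ℝ)..T, |κ ^ 2 * Af C ρ r (κ * x) - lamT T n|
        ≤ ∫ x in (0:ℝ)..T, κ ^ 2 * b (κ * x) := by
          apply intervalIntegral.integral_mono_on hT.le hdiffint.abs
            (Continuous.intervalIntegrable (by fun_prop) _ _)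
          exact fun x _ => habs x
      _ = κ * ∫ X in (0:ℝ)..(N * Real.pi), b X := by
          rw [intervalIntegral.integral_const_mul, intervalIntegral.integral_comp_mul_left _ hκ0.ne',
            mul_zero, hκT, smul_eq_mul]
          field_simp
      _ = κ * (N * ∫ X in (0:ℝ)..Real.pi, b X) := by
          have h := hper.intervalIntegral_add_zsmul_eq (N : ℤ) 0
            (fun a c => cb.intervalIntegrable a c)
          simp only [zsmul_eq_mul, Int.cast_natCast, zero_add] at h
          rw [h]
      _ ≤ κ * (N * (ρ * Real.cot (ρ * Real.pi / 2) * 2 + ρ * C * (4 * δ))) := by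
          have hi1 : IntervalIntegrable (fun X => ρ * Real.cot (ρ * Real.pi / 2) * |S2 r X|)
            volume 0 Real.pi := Continuous.intervalIntegrable (by fun_prop) _ _
          have hi2 : IntervalIntegrable (fun X => ρ * C * (1 - S1 r X ^ 2))
            volume 0 Real.pi := Continuous.intervalIntegrable (by fun_prop) _ _
          rw [hb, intervalIntegral.integral_add hi1 hi2, intervalIntegral.integral_const_mul,
            intervalIntegral.integral_const_mul, int_S2 h0 h1]
          have := int_S1 hδ0 hδ1
          gcongr
          linarith
      _ < betaT1 T n + ε := by
          rw [hbeta]; linarith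

theorem stmt9 (T : ℝ) (hT : 0 < T) (n : ℕ) (hn : 1 ≤ n) :
    (∀ a ∈ LambdaTildeN T n, betaT1 T n < ∫ x in (0:ℝ)..T, |a x - lamT T n|) ∧
    ¬ ∃ a ∈ LambdaTildeN T n,
        (∫ x in (0:ℝ)..T, |a x - lamT T n|) =
          sInf ((fun a : ℝ → ℝ => ∫ x in (0:ℝ)..T, |a x - lamT T n|) '' LambdaTildeN T n) := by
  refine ⟨part1 T hT n hn, ?_⟩
  rintro ⟨a, ha, heq⟩
  have h1 := part1 T hT n hn a ha
  obtain ⟨c, hc, hlt⟩ := exists_near T hT n hn _ (sub_pos.mpr h1)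
  have hbdd : BddBelow ((fun a : ℝ → ℝ => ∫ x in (0:ℝ)..T, |a x - lamT T n|) '' LambdaTildeN T n) := by
    refine ⟨betaT1 T n, ?_⟩
    rintro _ ⟨d, hd, rfl⟩
    exact (part1 T hT n hn d hd).le
  have h2 := csInf_le hbdd ⟨c, hc, rfl⟩
  rw [← heq] at h2
  simp only at h2
  linarith
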